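/- Let V be a vector space of finite dimension over the finite field F_q, let G ≤ GL(V) be an irreducible subgroup, and let H ≤ G be a reducible subgroup. Then the poset Î(G,H), ordered by inclusion, is a lattice: (i) for all K1, K2 ∈ Î(G,H), the intersection K1 ∩ K2 belongs to Î(G,H) and is the meet of K1 and K2 in Î(G,H); (ii) for all K1, K2 ∈ Î(G,H), the set {K ∈ Î(G,H) : K1 ≤ K and K2 ≤ K} has a least element. -/

import Mathlib

variable {F V : Type*} [Field F] [AddCommGroup V] [Module F V]

/-- The stabilizer in `G` of a subspace `W` of `V`: `{g ∈ G : gW = W}`. -/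
def sstab (G : Subgroup (V ≃ₗ[F] V)) (W : Submodule F V) : Subgroup (V ≃ₗ[F] V) where
  carrier := {g | g ∈ G ∧ Submodule.map (g : V →ₗ[F] V) W = W}
  one_mem' := ⟨G.one_mem, by simp⟩
  mul_mem' := by
    rintro a b ⟨ha, ha'⟩ ⟨hb, hb'⟩
    refine ⟨G.mul_mem ha hb, ?_⟩
    rw [show ((a * b : V ≃ₗ[F] V) : V →ₗ[F] V) = (a : V →ₗ[F] V).comp (b : V →ₗ[F] V) from rfl,
      Submodule.map_comp, hb', ha']
  inv_mem' := by
    rintro a ⟨ha, ha'⟩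
    refine ⟨G.inv_mem ha, ?_⟩
    conv_lhs => rw [← ha']
    rw [← Submodule.map_comp]
    rw [show ((a⁻¹ : V ≃ₗ[F] V) : V →ₗ[F] V).comp (a : V →ₗ[F] V) = LinearMap.id from by
      ext x; exact a.symm_apply_apply x]
    exact Submodule.map_id W

/-- The family `C(G,H)` of stabilizers of proper non-trivial subspaces of `V` containing `H`. -/
def Cfam (G H : Subgroup (V ≃ₗ[F] V)) : Set (Subgroup (V ≃ₗ[F] V)) :=
  {M | ∃ W : Submodule F V, W ≠ ⊥ ∧ W ≠ ⊤ ∧ H ≤ sstab G W ∧ M = sstab G W}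

/-- `S(V,H)*`: the proper non-trivial `H`-invariant subspaces of `V`. -/
def SStar (H : Subgroup (V ≃ₗ[F] V)) : Set (Submodule F V) :=
  {W | W ≠ ⊥ ∧ W ≠ ⊤ ∧ ∀ g ∈ H, Submodule.map ((g : V ≃ₗ[F] V) : V →ₗ[F] V) W = W}

/-- `Ψ(G,H)`: subsets of `C(G,H)` whose intersection (taken to be `G` when empty) is not `H`. -/
def Psi (G H : Subgroup (V ≃ₗ[F] V)) : Set (Set (Subgroup (V ≃ₗ[F] V))) :=
  {X | X ⊆ Cfam G H ∧ G ⊓ sInf X ≠ H}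

/-- `Ψ(G,H)ᶜ`: non-empty subsets of `C(G,H)` whose intersection is exactly `H`. -/
def PsiC (G H : Subgroup (V ≃ₗ[F] V)) : Set (Set (Subgroup (V ≃ₗ[F] V))) :=
  {Y | Y ⊆ Cfam G H ∧ Y ≠ ∅ ∧ G ⊓ sInf Y = H}

/-- `Ψ'(G,H)`: subsets `E` of `S(V,H)*` with `∩_{W ∈ E} stab_G(W) ≠ H`
(the empty intersection being `G`). -/
def Psi' (G H : Subgroup (V ≃ₗ[F] V)) : Set (Set (Submodule F V)) :=
  {E | E ⊆ SStar H ∧ (G ⊓ ⨅ W ∈ E, sstab G W) ≠ H}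

/-- The reducible subgroup ideal `I(G,H)`. -/
def redIdeal (G H : Subgroup (V ≃ₗ[F] V)) : Set (Subgroup (V ≃ₗ[F] V)) :=
  {K | ∃ M ∈ Cfam G H, H ≤ K ∧ K ≤ M}

/-- The poset `Î(G,H) = I(G,H) ∪ {H, G}`. -/
def Ihat (G H : Subgroup (V ≃ₗ[F] V)) : Set (Subgroup (V ≃ₗ[F] V)) :=
  redIdeal G H ∪ {H, G}

/-- A subgroup `K ≤ GL(V)` is irreducible if the only `K`-invariant subspaces are `0` and `V`. -/
def IsIrred (K : Subgroup (V ≃ₗ[F] V)) : Prop :=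
  ∀ W : Submodule F V, (∀ g ∈ K, Submodule.map ((g : V ≃ₗ[F] V) : V →ₗ[F] V) W = W) →
    W = ⊥ ∨ W = ⊤

/-- `mu` is the Möbius function of the subposet of the subgroup lattice given by `S`,
ordered by inclusion: `mu x y = 0` unless `x ≤ y`, `mu x x = 1`, and
`∑_{x ≤ t ≤ y} mu x t = 0` whenever `x < y` (all elements ranging in `S`). -/
def IsMobius (S : Set (Subgroup (V ≃ₗ[F] V)))
    (mu : Subgroup (V ≃ₗ[F] V) → Subgroup (V ≃ₗ[F] V) → ℤ) : Prop :=
  (∀ x ∈ S, ∀ y ∈ S, ¬x ≤ y → mu x y = 0) ∧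
  (∀ x ∈ S, mu x x = 1) ∧
  (∀ x ∈ S, ∀ y ∈ S, x < y → (∑ᶠ t ∈ {t | t ∈ S ∧ x ≤ t ∧ t ≤ y}, mu x t) = 0)

/-!
The elements of `Î(G,H)` other than its top `G` form a downward closed part of the interval
`[H, G]`. Hence intersections stay in `Î(G,H)`. If some upper bound of `K₁` and `K₂` in `Î(G,H)`
differs from `G`, then downward closure puts the subgroup `K₁ ⊔ K₂` into `Î(G,H)`, where it is the
join; otherwise the join is `G`.
-/

/-- `S` is a downward closed part of the interval `[a, b]` with the top `b` adjoined: every element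
of `S` other than `b` brings along everything between `a` and itself. Such sets are lattices
whenever the ambient order is, and `Î(G,H)` is one of them in `[H, G]`. -/
structure IsCappedLowerSet {α : Type*} [Preorder α] (a b : α) (S : Set α) : Prop where
  subset_Icc : S ⊆ Set.Icc a b
  top_mem : b ∈ S
  mem_of_le : ∀ ⦃x y⦄, x ∈ S → x ≠ b → a ≤ y → y ≤ x → y ∈ S

namespace IsCappedLowerSet

variable {α : Type*} {a b x y : α} {S : Set α}

theorem inf_mem [SemilatticeInf α] (hS : IsCappedLowerSet a b S) (hx : x ∈ S) (hy : y ∈ S) :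
    x ⊓ y ∈ S := by
  obtain rfl | hxb := eq_or_ne x b
  · rwa [inf_eq_right.2 (hS.subset_Icc hy).2]
  · exact hS.mem_of_le hx hxb (le_inf (hS.subset_Icc hx).1 (hS.subset_Icc hy).1) inf_le_left

theorem isLeast_top_of_sup_notMem [SemilatticeSup α] (hS : IsCappedLowerSet a b S) (hx : x ∈ S)
    (hy : y ∈ S) (hxy : x ⊔ y ∉ S) : IsLeast {z ∈ S | x ≤ z ∧ y ≤ z} b := by
  refine ⟨⟨hS.top_mem, (hS.subset_Icc hx).2, (hS.subset_Icc hy).2⟩, ?_⟩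
  rintro z ⟨hz, hxz, hyz⟩
  have ha : a ≤ x ⊔ y := (hS.subset_Icc hx).1.trans le_sup_left
  have hzb : z = b := by
    by_contra hne
    exact hxy (hS.mem_of_le hz hne ha (sup_le hxz hyz))
  exact hzb.ge

theorem exists_isLeast_upperBound [SemilatticeSup α] (hS : IsCappedLowerSet a b S) (hx : x ∈ S)
    (hy : y ∈ S) : ∃ j, IsLeast {z ∈ S | x ≤ z ∧ y ≤ z} j := by
  by_cases hxy : x ⊔ y ∈ S
  · exact ⟨x ⊔ y, ⟨hxy, le_sup_left, le_sup_right⟩, fun _ hz => sup_le hz.2.1 hz.2.2⟩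
  · exact ⟨b, hS.isLeast_top_of_sup_notMem hx hy hxy⟩

end IsCappedLowerSet

section ReducibleIdeal

variable {G H K L : Subgroup (V ≃ₗ[F] V)}

theorem sstab_le (G : Subgroup (V ≃ₗ[F] V)) (W : Submodule F V) : sstab G W ≤ G :=
  fun _ hg => hg.1

theorem redIdeal_subset_Icc : redIdeal G H ⊆ Set.Icc H G := by
  rintro K ⟨_, ⟨W, -, -, -, rfl⟩, hHK, hKW⟩
  exact ⟨hHK, hKW.trans (sstab_le G W)⟩

theorem mem_redIdeal_of_le (hK : K ∈ redIdeal G H) (hHL : H ≤ L) (hLK : L ≤ K) :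
    L ∈ redIdeal G H :=
  let ⟨M, hM, _, hKM⟩ := hK
  ⟨M, hM, hHL, hLK.trans hKM⟩

theorem isCappedLowerSet_Ihat (hHG : H ≤ G) : IsCappedLowerSet H G (Ihat G H) where
  subset_Icc := by
    rintro K (hK | rfl | rfl)
    · exact redIdeal_subset_Icc hK
    · exact Set.left_mem_Icc.2 hHG
    · exact Set.right_mem_Icc.2 hHG
  top_mem := Or.inr (Or.inr rfl)
  mem_of_le := by
    rintro K L (hK | rfl | rfl) hKG hHL hLK
    · exact Or.inl (mem_redIdeal_of_le hK hHL hLK)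
    · exact Or.inr (Or.inl (le_antisymm hLK hHL))
    · exact absurd rfl hKG

end ReducibleIdeal

theorem Ihat_isLattice_general (G H : Subgroup (V ≃ₗ[F] V)) (hHG : H ≤ G) :
    (∀ K₁ ∈ Ihat G H, ∀ K₂ ∈ Ihat G H,
      K₁ ⊓ K₂ ∈ Ihat G H ∧ K₁ ⊓ K₂ ≤ K₁ ∧ K₁ ⊓ K₂ ≤ K₂ ∧
        ∀ K ∈ Ihat G H, K ≤ K₁ → K ≤ K₂ → K ≤ K₁ ⊓ K₂) ∧
    (∀ K₁ ∈ Ihat G H, ∀ K₂ ∈ Ihat G H, ∃ J ∈ Ihat G H, K₁ ≤ J ∧ K₂ ≤ J ∧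
      ∀ K ∈ Ihat G H, K₁ ≤ K → K₂ ≤ K → J ≤ K) := by
  have hI := isCappedLowerSet_Ihat hHG
  refine ⟨fun K₁ h₁ K₂ h₂ => ?meet, fun K₁ h₁ K₂ h₂ => ?join⟩
  case meet =>
    exact ⟨hI.inf_mem h₁ h₂, inf_le_left, inf_le_right, fun _ _ => le_inf⟩
  case join =>
    obtain ⟨J, ⟨hJ, hJ₁, hJ₂⟩, hJ_least⟩ := hI.exists_isLeast_upperBound h₁ h₂
    exact ⟨J, hJ, hJ₁, hJ₂, fun K hK hK₁ hK₂ => hJ_least ⟨hK, hK₁, hK₂⟩⟩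

/-- `Î(G,H)` is a lattice: intersections of elements stay in `Î(G,H)` and give meets, and
any two elements have a least upper bound in `Î(G,H)`. -/
theorem Ihat_isLattice [Fintype F] [FiniteDimensional F V]
    (G H : Subgroup (V ≃ₗ[F] V)) (hHG : H ≤ G) (hGirr : IsIrred G) (hHred : ¬IsIrred H) :
    (∀ K₁ ∈ Ihat G H, ∀ K₂ ∈ Ihat G H,
      K₁ ⊓ K₂ ∈ Ihat G H ∧ K₁ ⊓ K₂ ≤ K₁ ∧ K₁ ⊓ K₂ ≤ K₂ ∧
        ∀ K ∈ Ihat G H, K ≤ K₁ → K ≤ K₂ → K ≤ K₁ ⊓ K₂) ∧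
    (∀ K₁ ∈ Ihat G H, ∀ K₂ ∈ Ihat G H, ∃ J ∈ Ihat G H, K₁ ≤ J ∧ K₂ ≤ J ∧
      ∀ K ∈ Ihat G H, K₁ ≤ K → K₂ ≤ K → J ≤ K) :=
  Ihat_isLattice_general G H hHG
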